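/- arXiv:1706.02007 — 2 statements merged into one kernel-verified Lean document; each statement's English description precedes it below -/
import Mathlib

section
/- Let d ≥ 2 and let (r₁,r₂,r₃) be a strictly admissible triple of positive reals. There exists A < 1/2 such that for all real spherical harmonics G₂, G₃ of degree 2 on S^{d−1}, Q₁(G₂,G₃) ≤ A · (γ₂ r₂^{1−d} ‖G₂‖²_{L²(S^{d−1})} + γ₃ r₃^{1−d} ‖G₃‖²_{L²(S^{d−1})}). -/
/-!
Write `d = n + 1` and let `v` be the volume of the unit ball of `ℝ^n`. On the unit sphere the
condition `|r₂ x + r₃ y| ≤ r₁` reads `⟪x, y⟫ ≤ c` with `c = (r₁² - r₂² - r₃²) / (2 r₂ r₃)`, and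
strict admissibility says exactly that `-1 < c < 1`; `-c` is the cosine of the angle opposite to the
side `r₁` in the triangle with sides `r₁, r₂, r₃`. Put `s = √(1 - c²)`.

* Harmonics of degree two are the forms `⟪y, T y⟫` with `T` of trace zero (`harmonic_two_repr`).
  By the Funk–Hecke formula (`funk_hecke`), integration against the indicator of `⟪x, y⟫ ≤ c`
  multiplies them by `-v c sⁿ`. The symmetries of the cap reduce this to one zonal integral
  (`zonal_quadratic`), which has an elementary antiderivative. Hence
  `Q₁(G₂, G₃) = -v c sⁿ ∫ G₂ G₃ dσ`.
* `K_k` is the volume of the intersection of two balls, and its derivative with respect to the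
  distance of the centres is minus the volume of the `n`-dimensional ball spanned by the intersection
  of the two boundary spheres (`Kker_axis`, `gammaCoef_ge`). The radius of that ball is an altitude
  of the triangle, so `γ₂ ≥ v (r₃ s)ⁿ` and `γ₃ ≥ v (r₂ s)ⁿ` (equalities, in fact).

The inequality between arithmetic and geometric means, with weight `(r₃ / r₂)ⁿ`, then gives the claim
with `A = |c| / 2 < 1 / 2`.
-/

open MeasureTheory Set

noncomputable section

/-- `ℝ^d` with Lebesgue measure. -/
abbrev Vec (d : ℕ) := EuclideanSpace ℝ (Fin d)

/-- Indicator function of a set, with value `1 : ℝ`. -/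
def ind {d : ℕ} (E : Set (Vec d)) : Vec d → ℝ := E.indicator 1

/-- Convolution of two functions on `ℝ^d`. -/
def conv {d : ℕ} (f g : Vec d → ℝ) (x : Vec d) : ℝ := ∫ y, f y * g (x - y)

/-- The rotation-invariant measure `σ` on the unit sphere `S^{d-1}`, normalized so that
Lebesgue measure equals `r^{d-1} dr dσ(θ)` in polar coordinates. -/
def sphereMeasure (d : ℕ) : Measure (Metric.sphere (0 : Vec d) 1) :=
  (volume : Measure (Vec d)).toSphere

/-- `G` is (the restriction to the unit sphere of) a real spherical harmonic of degree `n`: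
a homogeneous polynomial of degree `n` with vanishing Laplacian. -/
def IsSphericalHarmonic (d n : ℕ) (G : Vec d → ℝ) : Prop :=
  ∃ P : MvPolynomial (Fin d) ℝ, P.IsHomogeneous n ∧
    (∑ i : Fin d, MvPolynomial.pderiv i (MvPolynomial.pderiv i P)) = 0 ∧
    ∀ x : Vec d, ‖x‖ = 1 → G x = MvPolynomial.eval (fun i => x i) P

/-- The bilinear form `Q_k(F,G) = ∫∫ F(x) G(y) 1_{|r_i x + r_j y| ≤ r_k} dσ(x) dσ(y)`. -/
def Qform {d : ℕ} (r : Fin 3 → ℝ) (i j k : Fin 3) (F G : Vec d → ℝ) : ℝ :=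
  ∫ x : Metric.sphere (0 : Vec d) 1, ∫ y : Metric.sphere (0 : Vec d) 1,
    F x * G y * (if ‖r i • (x : Vec d) + r j • (y : Vec d)‖ ≤ r k then (1:ℝ) else 0)
  ∂(sphereMeasure d) ∂(sphereMeasure d)

/-- `Q(F₁,F₂,F₃) = Q₁(F₂,F₃) + Q₂(F₃,F₁) + Q₃(F₁,F₂)` (indices taken as `0,1,2`). -/
def Qtot {d : ℕ} (r : Fin 3 → ℝ) (F : Fin 3 → Vec d → ℝ) : ℝ :=
  Qform r 1 2 0 (F 1) (F 2) + Qform r 2 0 1 (F 2) (F 0) + Qform r 0 1 2 (F 0) (F 1)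

/-- The squared `L²(S^{d-1})` norm. -/
def L2sq {d : ℕ} (G : Vec d → ℝ) : ℝ :=
  ∫ θ : Metric.sphere (0 : Vec d) 1, (G θ) ^ 2 ∂(sphereMeasure d)

/-- A triple of positive reals is strictly admissible. -/
def StrictlyAdmissible (r : Fin 3 → ℝ) : Prop :=
  (∀ j, 0 < r j) ∧
  (∀ i j k : Fin 3, ({i, j, k} : Set (Fin 3)) = Set.univ → r k < r i + r j)

/-- The kernel `K_k = 1_{B_i} * 1_{B_j}`, where `{i,j,k} = {0,1,2}` and `B_m` is the
closed ball of radius `r_m` centered at `0`. -/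
def Kker {d : ℕ} (r : Fin 3 → ℝ) (k : Fin 3) : Vec d → ℝ :=
  conv (ind (Metric.closedBall 0 (r (k + 1)))) (ind (Metric.closedBall 0 (r (k + 2))))

/-- `γ_k = |∇K_k(x)|` for `|x| = r_k`; since `K_k` is radial this does not depend on the
choice of such `x`, and we evaluate at `r_k • e₀`. -/
def gammaCoef (d : ℕ) (r : Fin 3 → ℝ) (k : Fin 3) : ℝ :=
  if h : d = 0 then 0 else
    ‖fderiv ℝ (Kker r k)
      (r k • EuclideanSpace.single (⟨0, Nat.pos_of_ne_zero h⟩ : Fin d) (1 : ℝ))‖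


/-! ### Integration over the sphere -/

/-- Integrals over the sphere as integrals over the unit ball of the degree-zero homogeneous
extension. No integrability is needed: both sides are `0` otherwise. -/
theorem sphere_integral_eq (n : ℕ) (f : Vec (n + 1) → ℝ) :
    ∫ x : Metric.sphere (0 : Vec (n + 1)) 1, f x ∂(sphereMeasure (n + 1)) =
      (n + 1) * ∫ y : Vec (n + 1), (if ‖y‖ < 1 then f (‖y‖⁻¹ • y) else 0) := by
  set μ : Measure (Vec (n + 1)) := volume
  have hdim : Module.finrank ℝ (Vec (n + 1)) - 1 = n := by simp
  have hmp := μ.measurePreserving_homeomorphUnitSphereProd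
  rw [hdim] at hmp
  have hw : ∫ t : Ioi (0 : ℝ), (Iio (⟨1, mem_Ioi.2 one_pos⟩ : Ioi (0 : ℝ))).indicator (1 : Ioi (0 : ℝ) → ℝ) t
      ∂(Measure.volumeIoiPow n) = 1 / (n + 1) := by
    rw [integral_indicator_one measurableSet_Iio, measureReal_def,
      Measure.volumeIoiPow_apply_Iio, ENNReal.toReal_ofReal (by positivity)]
    simp
  have h0 : MeasurableSet ({0}ᶜ : Set (Vec (n + 1))) := isClosed_singleton.measurableSet.compl
  have key : ∫ y : Vec (n + 1), (if ‖y‖ < 1 then f (‖y‖⁻¹ • y) else 0) ∂μ =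
      (∫ x : Metric.sphere (0 : Vec (n + 1)) 1, f x ∂(sphereMeasure (n + 1))) * (1 / (n + 1)) := by
    rw [← hw, sphereMeasure, ← integral_prod_mul, ← hmp.integral_comp
        (Homeomorph.measurableEmbedding _),
      ← restrict_compl_singleton (μ := μ) 0,
      ← integral_subtype_comap h0
        (fun y : Vec (n + 1) => if ‖y‖ < 1 then f (‖y‖⁻¹ • y) else 0),
      restrict_compl_singleton]
    congr 1
    ext y
    have h1 : ((homeomorphUnitSphereProd (Vec (n + 1)) y).2 ∈ Iio (⟨1, mem_Ioi.2 one_pos⟩ : Ioi (0 : ℝ))) ↔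
        ‖(y : Vec (n + 1))‖ < 1 := by
      rw [mem_Iio, ← Subtype.coe_lt_coe]; simp
    by_cases h : ‖(y : Vec (n + 1))‖ < 1
    · simp [indicator, h1, h]
    · simp [indicator, h1, h]
  rw [key]
  field_simp

theorem sphere_integral_comp_isometry (n : ℕ) (f : Vec (n + 1) → ℝ)
    (U : Vec (n + 1) ≃ₗᵢ[ℝ] Vec (n + 1)) :
    ∫ x : Metric.sphere (0 : Vec (n + 1)) 1, f (U x) ∂(sphereMeasure (n + 1)) =
    ∫ x : Metric.sphere (0 : Vec (n + 1)) 1, f x ∂(sphereMeasure (n + 1)) := by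
  rw [sphere_integral_eq n f, sphere_integral_eq n (fun x => f (U x)),
    ← (LinearIsometryEquiv.measurePreserving U).integral_comp U.toMeasurableEquiv.measurableEmbedding
      (fun y => if ‖y‖ < 1 then f (‖y‖⁻¹ • y) else 0)]
  simp

/-- The splitting `ℝ × ℝ^n ≃ ℝ^{n+1}`, `(t, z) ↦ (t, z₁, …, z_n)`. -/
def consEquiv (n : ℕ) : ℝ × Vec n ≃ᵐ Vec (n + 1) :=
  ((MeasurableEquiv.refl ℝ).prodCongr (MeasurableEquiv.toLp 2 (Fin n → ℝ)).symm).trans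
    ((MeasurableEquiv.piFinSuccAbove (fun _ : Fin (n + 1) => ℝ) 0).symm.trans
      (MeasurableEquiv.toLp 2 (Fin (n + 1) → ℝ)))

theorem measurePreserving_consEquiv (n : ℕ) : MeasurePreserving (consEquiv n) volume volume := by
  have h1 : MeasurePreserving ((MeasurableEquiv.refl ℝ).prodCongr
      (MeasurableEquiv.toLp 2 (Fin n → ℝ)).symm) (volume.prod volume) (volume.prod volume) :=
    (MeasurePreserving.id _).prod (EuclideanSpace.volume_preserving_symm_measurableEquiv_toLp _)
  have h2 := (volume_preserving_piFinSuccAbove (fun _ : Fin (n + 1) => ℝ) 0).symm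
  have h3 := (EuclideanSpace.volume_preserving_symm_measurableEquiv_toLp (Fin (n + 1))).symm
  exact h3.comp (h2.comp h1)

theorem consEquiv_zero (n : ℕ) (p : ℝ × Vec n) : (consEquiv n p) 0 = p.1 := by
  simp [consEquiv]
  rfl

theorem consEquiv_succ (n : ℕ) (p : ℝ × Vec n) (i : Fin n) : (consEquiv n p) i.succ = p.2 i := by
  simp [consEquiv]
  rfl

theorem consEquiv_norm_sq (n : ℕ) (p : ℝ × Vec n) : ‖consEquiv n p‖ ^ 2 = p.1 ^ 2 + ‖p.2‖ ^ 2 := by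
  rw [EuclideanSpace.norm_sq_eq, EuclideanSpace.norm_sq_eq, Fin.sum_univ_succ]
  simp [consEquiv_zero, consEquiv_succ]

theorem unit_ball_vol_pos (n : ℕ) : 0 < (volume : Measure (Vec n)).real (Metric.ball 0 1) := by
  rw [measureReal_def]
  exact ENNReal.toReal_pos (Metric.measure_ball_pos _ _ one_pos).ne' measure_ball_lt_top.ne

/-- Integral of a function of the first coordinate over the sphere. Slicing the unit ball of
`ℝ^{n+1}` as `ℝ × ℝ^n` and using polar coordinates in `ℝ^n` reduces it to an integral in the
half-plane `{(t, ρ) : ρ > 0}`, which is then evaluated in planar polar coordinates. -/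
theorem zonal_integral (n : ℕ) (hn : 1 ≤ n) (f : ℝ → ℝ) (hf : Measurable f) (C : ℝ)
    (hC : ∀ t, |t| ≤ 1 → |f t| ≤ C) :
    ∫ x : Metric.sphere (0 : Vec (n + 1)) 1, f ((x : Vec (n + 1)) 0) ∂(sphereMeasure (n + 1)) =
      n * (volume : Measure (Vec n)).real (Metric.ball 0 1) *
        ∫ θ in Ioo 0 Real.pi, Real.sin θ ^ (n - 1) * f (Real.cos θ) := by
  have : Nontrivial (Vec n) := by
    have : Nonempty (Fin n) := ⟨⟨0, hn⟩⟩
    infer_instance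
  have hC0 : 0 ≤ C := (abs_nonneg _).trans (hC 0 (by simp))
  have hfrac : ∀ t ρ : ℝ, |(Real.sqrt (t ^ 2 + ρ ^ 2))⁻¹ * t| ≤ 1 := by
    intro t ρ
    rw [abs_mul, abs_inv, abs_of_nonneg (Real.sqrt_nonneg _), inv_mul_eq_div]
    exact div_le_one_of_le₀ (Real.abs_le_sqrt (by nlinarith [sq_nonneg ρ])) (Real.sqrt_nonneg _)
  set v := (volume : Measure (Vec n)).real (Metric.ball 0 1) with hv
  -- the integrand on the unit ball, as a function of `t` and `ρ = ‖z‖`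
  let g : ℝ → ℝ → ℝ := fun t ρ =>
    if Real.sqrt (t ^ 2 + ρ ^ 2) < 1 then f ((Real.sqrt (t ^ 2 + ρ ^ 2))⁻¹ * t) else 0
  have hg : ∀ t ρ, |g t ρ| ≤ C := by
    intro t ρ
    simp only [g]
    split_ifs
    · exact hC _ (hfrac t ρ)
    · simpa
  have hgm : Measurable (fun p : ℝ × ℝ => g p.1 p.2) := by
    refine Measurable.ite (measurableSet_lt (by fun_prop) (by fun_prop)) ?_ measurable_const
    exact hf.comp (by fun_prop)
  have hnorm : ∀ p : ℝ × Vec n, ‖consEquiv n p‖ = Real.sqrt (p.1 ^ 2 + ‖p.2‖ ^ 2) := by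
    intro p
    rw [← consEquiv_norm_sq, Real.sqrt_sq (norm_nonneg _)]
  have hslice : Integrable (fun p : ℝ × Vec n => g p.1 ‖p.2‖) (volume.prod volume) := by
    have : IntegrableOn (fun p : ℝ × Vec n => g p.1 ‖p.2‖)
        (Metric.closedBall 0 1 ×ˢ Metric.closedBall 0 1) (volume.prod volume) := by
      refine Measure.integrableOn_of_bounded (M := C) ?_ ?_ ?_
      · rw [Measure.prod_prod]
        exact ENNReal.mul_ne_top measure_closedBall_lt_top.ne measure_closedBall_lt_top.ne
      · exact (hgm.comp (measurable_fst.prodMk measurable_snd.norm)).aestronglyMeasurable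
      · exact Filter.Eventually.of_forall fun p => hg _ _
    rw [integrableOn_iff_integrable_of_support_subset] at this
    · exact this
    · intro p hp
      rw [Function.mem_support] at hp
      have h1 : Real.sqrt (p.1 ^ 2 + ‖p.2‖ ^ 2) < 1 := by
        by_contra h
        exact hp (by simp [g, h])
      rw [Real.sqrt_lt' one_pos] at h1
      simp only [mem_prod, Metric.mem_closedBall, dist_zero_right, Real.norm_eq_abs]
      exact ⟨abs_le_one_iff_mul_self_le_one.2 (by nlinarith [sq_nonneg ‖p.2‖]),
        by nlinarith [sq_nonneg p.1, norm_nonneg p.2]⟩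
  -- the weighted integrand on the half-plane, extended by zero
  let G : ℝ × ℝ → ℝ := fun p => (Ioi (0 : ℝ)).indicator (fun ρ => ρ ^ (n - 1) * g p.1 ρ) p.2
  have hplane : Integrable G (volume.prod volume) := by
    have : IntegrableOn G (Metric.closedBall 0 1 ×ˢ Metric.closedBall 0 1)
        (volume.prod volume) := by
      refine Measure.integrableOn_of_bounded (M := C) ?_ ?_ ?_
      · rw [Measure.prod_prod]
        exact ENNReal.mul_ne_top measure_closedBall_lt_top.ne measure_closedBall_lt_top.ne
      · have : G = (univ ×ˢ Ioi (0 : ℝ)).indicator (fun p : ℝ × ℝ => p.2 ^ (n - 1) * g p.1 p.2) := by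
          ext p
          simp [G, indicator]
        rw [this]
        exact (((measurable_snd.pow_const _).mul hgm).indicator
          (MeasurableSet.univ.prod measurableSet_Ioi)).aestronglyMeasurable
      · refine (ae_restrict_iff' (measurableSet_closedBall.prod measurableSet_closedBall)).2
          (Filter.Eventually.of_forall fun p hp => ?_)
        simp only [mem_prod, Metric.mem_closedBall, dist_zero_right, Real.norm_eq_abs] at hp
        simp only [G, indicator]
        split_ifs
        · rw [Real.norm_eq_abs, abs_mul, abs_pow]
          calc |p.2| ^ (n - 1) * |g p.1 p.2| ≤ 1 * C := by
                gcongr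
                · exact pow_le_one₀ (abs_nonneg _) hp.2
                · exact hg _ _
            _ = C := one_mul _
        · simpa
    rw [integrableOn_iff_integrable_of_support_subset] at this
    · exact this
    · intro p hp
      rw [Function.mem_support] at hp
      have h1 : Real.sqrt (p.1 ^ 2 + p.2 ^ 2) < 1 := by
        by_contra h
        exact hp (by simp [G, g, h])
      rw [Real.sqrt_lt' one_pos] at h1
      simp only [mem_prod, Metric.mem_closedBall, dist_zero_right, Real.norm_eq_abs]
      exact ⟨abs_le_one_iff_mul_self_le_one.2 (by nlinarith [sq_nonneg p.2]),
        abs_le_one_iff_mul_self_le_one.2 (by nlinarith [sq_nonneg p.1])⟩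
  have e1 : ∫ y : Vec (n + 1), (if ‖y‖ < 1 then f ((‖y‖⁻¹ • y) 0) else 0) =
      n * v * ∫ p, G p := by
    rw [← (measurePreserving_consEquiv n).integral_comp (consEquiv n).measurableEmbedding]
    simp only [PiLp.smul_apply, smul_eq_mul, consEquiv_zero, hnorm]
    change ∫ p : ℝ × Vec n, g p.1 ‖p.2‖ ∂(volume.prod volume) = _
    rw [integral_prod _ hslice]
    change _ = n * v * ∫ p, G p ∂(volume.prod volume)
    rw [integral_prod _ hplane, ← integral_const_mul]
    congr 1
    ext t
    rw [integral_fun_norm_addHaar volume (fun ρ => g t ρ)]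
    simp only [G]
    rw [integral_indicator measurableSet_Ioi]
    simp [mul_assoc, hv]
  have e2 : ∫ p, G p = (1 / (n + 1)) *
      ∫ θ in Ioo 0 Real.pi, Real.sin θ ^ (n - 1) * f (Real.cos θ) := by
    rw [← integral_comp_polarCoord_symm]
    have h0 : (1 / (n + 1) : ℝ) = ∫ s in Ioi (0 : ℝ), (Iio (1 : ℝ)).indicator (fun s => s ^ n) s := by
      rw [setIntegral_indicator measurableSet_Iio, Ioi_inter_Iio, ← integral_Ioc_eq_integral_Ioo,
        ← intervalIntegral.integral_of_le zero_le_one]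
      simp
    have h1 : ∫ θ in Ioo 0 Real.pi, Real.sin θ ^ (n - 1) * f (Real.cos θ) =
        ∫ θ in Ioo (-Real.pi) Real.pi,
          (Ioi (0 : ℝ)).indicator (fun θ => Real.sin θ ^ (n - 1) * f (Real.cos θ)) θ := by
      rw [setIntegral_indicator measurableSet_Ioi]
      congr 2
      ext θ
      simp only [mem_Ioo, mem_inter_iff, mem_Ioi]
      constructor
      · rintro ⟨a, b⟩; exact ⟨⟨by linarith [Real.pi_pos], b⟩, a⟩
      · rintro ⟨⟨a, b⟩, c⟩; exact ⟨c, b⟩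
    rw [h0, h1]
    change ∫ p in polarCoord.target, p.1 • G (polarCoord.symm p) ∂(volume.prod volume) = _
    rw [← setIntegral_prod_mul]
    refine setIntegral_congr_fun (measurableSet_Ioi.prod measurableSet_Ioo) ?_
    rintro ⟨s, θ⟩ ⟨hs, hθ⟩
    simp only [mem_Ioi] at hs
    simp only [mem_Ioo] at hθ
    have hsq : Real.sqrt ((s * Real.cos θ) ^ 2 + (s * Real.sin θ) ^ 2) = s := by
      rw [show (s * Real.cos θ) ^ 2 + (s * Real.sin θ) ^ 2 =
        s ^ 2 * (Real.sin θ ^ 2 + Real.cos θ ^ 2) by ring, Real.sin_sq_add_cos_sq, mul_one,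
        Real.sqrt_sq hs.le]
    have hpos : 0 < s * Real.sin θ ↔ 0 < θ := by
      rw [mul_pos_iff_of_pos_left hs]
      constructor
      · intro h
        by_contra h'
        exact absurd h (not_lt.2 (Real.sin_nonpos_of_nonpos_of_neg_pi_le (not_lt.1 h') hθ.1.le))
      · intro h
        exact Real.sin_pos_of_pos_of_lt_pi h hθ.2
    simp only [polarCoord_symm_apply, G, g, indicator, mem_Ioi, mem_Iio, hpos, hsq]
    by_cases h1 : 0 < θ <;> by_cases h2 : s < 1
    · simp only [h1, h2, if_true, smul_eq_mul]
      rw [inv_mul_cancel_left₀ hs.ne', mul_pow]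
      obtain ⟨m, rfl⟩ : ∃ m, n = m + 1 := ⟨n - 1, by omega⟩
      simp only [Nat.add_sub_cancel]
      ring
    · simp [h1, h2]
    · simp [h1, h2]
    · simp [h1, h2]
  rw [sphere_integral_eq n (fun x => f (x 0)), e1, e2]
  field_simp

/-- The degree-two zonal integral over the cap `{x₀ ≤ c}`; the antiderivative of
`sin^{n-1} ((n+1) cos² - 1)` is `cos * sin^n`. -/
theorem zonal_quadratic (n : ℕ) (hn : 1 ≤ n) (c : ℝ) (hc : -1 < c) (hc' : c < 1) :
    ∫ x : Metric.sphere (0 : Vec (n + 1)) 1, (((n : ℝ) + 1) * ((x : Vec (n + 1)) 0) ^ 2 - 1) *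
        (if (x : Vec (n + 1)) 0 ≤ c then 1 else 0) ∂(sphereMeasure (n + 1)) =
      - (n * (volume : Measure (Vec n)).real (Metric.ball 0 1) * (c * Real.sqrt (1 - c ^ 2) ^ n)) := by
  have hm : Measurable (fun t : ℝ => ((n : ℝ) + 1) * t ^ 2 - 1) := by fun_prop
  rw [zonal_integral n hn (fun t => (((n : ℝ) + 1) * t ^ 2 - 1) * (if t ≤ c then 1 else 0))
    (hm.mul (Measurable.ite measurableSet_Iic measurable_const measurable_const)) (n + 2) ?_]
  · rw [← mul_neg]
    congr 1
    have hset : ∫ θ in Ioo 0 Real.pi, Real.sin θ ^ (n - 1) *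
          ((((n : ℝ) + 1) * Real.cos θ ^ 2 - 1) * (if Real.cos θ ≤ c then 1 else 0)) =
        ∫ θ in Ioo 0 Real.pi, (Ici (Real.arccos c)).indicator
          (fun θ => Real.sin θ ^ (n - 1) * (((n : ℝ) + 1) * Real.cos θ ^ 2 - 1)) θ := by
      refine setIntegral_congr_fun measurableSet_Ioo ?_
      intro θ hθ
      have : Real.cos θ ≤ c ↔ Real.arccos c ≤ θ := by
        conv_lhs => rw [← Real.cos_arccos hc.le hc'.le]
        exact Real.strictAntiOn_cos.le_iff_ge ⟨hθ.1.le, hθ.2.le⟩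
          ⟨Real.arccos_nonneg _, Real.arccos_le_pi _⟩
      simp only [indicator, mem_Ici, this]
      split_ifs <;> simp
    have hpos : 0 < Real.arccos c := Real.arccos_pos.2 hc'
    rw [hset, setIntegral_indicator measurableSet_Ici]
    have : Ioo 0 Real.pi ∩ Ici (Real.arccos c) = Ico (Real.arccos c) Real.pi := by
      ext θ
      simp only [mem_Ioo, mem_inter_iff, mem_Ici, mem_Ico]
      constructor
      · rintro ⟨⟨a, b⟩, c⟩; exact ⟨c, b⟩
      · rintro ⟨a, b⟩; exact ⟨⟨by linarith, b⟩, a⟩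
    rw [this, integral_Ico_eq_integral_Ioo, ← integral_Ioc_eq_integral_Ioo,
      ← intervalIntegral.integral_of_le (Real.arccos_le_pi _)]
    rw [intervalIntegral.integral_eq_sub_of_hasDerivAt
      (f := fun θ => Real.cos θ * Real.sin θ ^ n)]
    · simp [Real.cos_arccos hc.le hc'.le, Real.sin_arccos, show n ≠ 0 by omega]
    · intro θ _
      refine ((Real.hasDerivAt_cos θ).mul ((Real.hasDerivAt_sin θ).pow n)).congr_deriv ?_
      obtain ⟨m, rfl⟩ : ∃ m, n = m + 1 := ⟨n - 1, by omega⟩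
      simp only [Nat.add_sub_cancel, Nat.cast_add, Nat.cast_one, Pi.pow_apply]
      linear_combination -(Real.sin θ ^ m) * Real.sin_sq_add_cos_sq θ
    · exact (Continuous.intervalIntegrable (by fun_prop) _ _)
  · intro t ht
    have : t ^ 2 ≤ 1 := (sq_le_one_iff_abs_le_one t).2 ht
    have hn0 : (0 : ℝ) ≤ n := Nat.cast_nonneg n
    split_ifs
    · rw [mul_one, abs_le]
      constructor <;> nlinarith [sq_nonneg t,
        mul_nonneg hn0 (sq_nonneg t), mul_nonneg hn0 (sub_nonneg.2 this)]
    · simp; positivity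

/-! ### The Funk–Hecke formula in degree two -/

/-- Indicator, as a function of `y`, of the region `⟪x, y⟫ ≤ c`. On the unit sphere this is a
spherical cap around `-x`. -/
def cap {n : ℕ} (c : ℝ) (x y : Vec (n + 1)) : ℝ := if inner ℝ x y ≤ c then 1 else 0

theorem integrable_mul_cap {n : ℕ} (c : ℝ) (x : Vec (n + 1)) (h : Vec (n + 1) → ℝ)
    (hh : Continuous h) :
    Integrable (fun y : Metric.sphere (0 : Vec (n + 1)) 1 => h y * cap c x y)
      (sphereMeasure (n + 1)) := by
  have : IsFiniteMeasure (sphereMeasure (n + 1)) := by unfold sphereMeasure; infer_instance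
  have h1 : Integrable (fun y : Metric.sphere (0 : Vec (n + 1)) 1 => h y)
      (sphereMeasure (n + 1)) := by
    obtain ⟨C, hC⟩ := (isCompact_sphere (0 : Vec (n + 1)) 1).exists_bound_of_continuousOn
      hh.continuousOn
    exact Integrable.of_bound (hh.comp continuous_subtype_val).aestronglyMeasurable C
      (Filter.Eventually.of_forall fun y => hC y y.2)
  refine h1.mul_bdd (c := 1) ?_ ?_
  · refine Measurable.aestronglyMeasurable ?_
    unfold cap
    refine Measurable.ite (measurableSet_le ?_ measurable_const) measurable_const measurable_const
    exact (Continuous.inner continuous_const continuous_subtype_val).measurable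
  · refine Filter.Eventually.of_forall fun y => ?_
    unfold cap
    split_ifs <;> simp

/-- The second moments `∫ ⟪u, y⟫ ⟪w, y⟫ dσ(y)` of the cap `⟪x, y⟫ ≤ c`. -/
def capMoment {n : ℕ} (c : ℝ) (x u w : Vec (n + 1)) : ℝ :=
  ∫ y : Metric.sphere (0 : Vec (n + 1)) 1, inner ℝ u (y : Vec (n + 1)) * inner ℝ w (y : Vec (n + 1))
    * cap c x y ∂(sphereMeasure (n + 1))

theorem capMoment_map {n : ℕ} (c : ℝ) (x u w : Vec (n + 1))
    (U : Vec (n + 1) ≃ₗᵢ[ℝ] Vec (n + 1)) :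
    capMoment c (U x) (U u) (U w) = capMoment c x u w := by
  unfold capMoment
  rw [← sphere_integral_comp_isometry n
    (fun y => inner ℝ (U u) y * inner ℝ (U w) y * cap c (U x) y) U]
  simp [cap, LinearIsometryEquiv.inner_map_map]

/-- The reflection `u ↦ -u` fixes `x` and `w`, hence changes the sign of the moment. -/
theorem capMoment_offdiag {n : ℕ} (c : ℝ) (x u w : Vec (n + 1)) (hx : inner ℝ u x = 0)
    (hw : inner ℝ u w = 0) : capMoment c x u w = 0 := by
  have h := capMoment_map c x u w (ℝ ∙ u)ᗮ.reflection
  rw [Submodule.reflection_orthogonalComplement_singleton_eq_neg,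
    Submodule.reflection_mem_subspace_eq_self (Submodule.mem_orthogonal_singleton_iff_inner_right.2 hx),
    Submodule.reflection_mem_subspace_eq_self (Submodule.mem_orthogonal_singleton_iff_inner_right.2 hw)] at h
  have h2 : capMoment c x (-u) w = - capMoment c x u w := by
    unfold capMoment
    rw [← integral_neg]
    simp [inner_neg_left]
  linarith

/-- The reflection exchanging `u` and `w` fixes `x`. -/
theorem capMoment_diag {n : ℕ} (c : ℝ) (x u w : Vec (n + 1)) (hu : inner ℝ u x = 0)
    (hw : inner ℝ w x = 0) (huw : ‖u‖ = ‖w‖) : capMoment c x u u = capMoment c x w w := by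
  have h := capMoment_map c x u u (ℝ ∙ (u - w))ᗮ.reflection
  rw [Submodule.reflection_sub huw,
    Submodule.reflection_mem_subspace_eq_self (Submodule.mem_orthogonal_singleton_iff_inner_right.2
      (by rw [inner_sub_left, hu, hw, sub_zero]))] at h
  exact h.symm

theorem capMoment_symm {n : ℕ} (c : ℝ) (x u w : Vec (n + 1)) :
    capMoment c x u w = capMoment c x w u := by
  unfold capMoment
  simp only [mul_comm (inner ℝ u _)]

theorem exists_isometry {n : ℕ} (x : Vec (n + 1)) (hx : ‖x‖ = 1) :
    ∃ U : Vec (n + 1) ≃ₗᵢ[ℝ] Vec (n + 1), U (EuclideanSpace.single 0 1) = x :=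
  ⟨(ℝ ∙ (EuclideanSpace.single 0 1 - x))ᗮ.reflection, Submodule.reflection_sub (by simp [hx])⟩

/-- Integration against the cap kernel multiplies a degree-two harmonic `⟪y, T y⟫` (`T` of trace
zero) by a constant. In an orthonormal basis starting with `x`, the second-moment matrix of the cap
is diagonal with entries `A0, A1, …, A1`, so the integral is `(A0 - A1) ⟪x, T x⟫`; moreover
`n (A0 - A1)` is the integral computed in `zonal_quadratic`. -/
theorem funk_hecke {n : ℕ} (hn : 1 ≤ n) (c : ℝ) (hc : -1 < c) (hc' : c < 1)
    (x : Vec (n + 1)) (hx : ‖x‖ = 1) (T : Vec (n + 1) →ₗ[ℝ] Vec (n + 1))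
    (hT : LinearMap.trace ℝ _ T = 0) :
    ∫ y : Metric.sphere (0 : Vec (n + 1)) 1, inner ℝ (y : Vec (n + 1)) (T y) * cap c x y
      ∂(sphereMeasure (n + 1)) =
    - ((volume : Measure (Vec n)).real (Metric.ball 0 1) * (c * Real.sqrt (1 - c ^ 2) ^ n))
      * inner ℝ x (T x) := by
  obtain ⟨U, hU⟩ := exists_isometry x hx
  let e : OrthonormalBasis (Fin (n + 1)) ℝ (Vec (n + 1)) := (EuclideanSpace.basisFun _ ℝ).map U
  have he0 : e 0 = x := by simp [e, hU]
  have hex : ∀ i : Fin n, inner ℝ (e i.succ) x = 0 := by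
    intro i
    rw [← he0]
    exact e.orthonormal.2 (Fin.succ_ne_zero i)
  set A0 := capMoment c x x x with hA0
  obtain ⟨A1, hA1⟩ : ∃ A1, ∀ i : Fin n, capMoment c x (e i.succ) (e i.succ) = A1 :=
    ⟨capMoment c x (e (Fin.succ ⟨0, hn⟩)) (e (Fin.succ ⟨0, hn⟩)), fun i =>
      capMoment_diag c x _ _ (hex _) (hex _) (by simp [e.orthonormal.1])⟩
  have hoff : ∀ i j, i ≠ j → capMoment c x (e i) (e j) = 0 := by
    intro i j hij
    rcases Fin.eq_zero_or_eq_succ i with rfl | ⟨i, rfl⟩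
    · obtain ⟨j, rfl⟩ := Fin.exists_succ_eq.2 hij.symm
      rw [capMoment_symm]
      exact capMoment_offdiag c x _ _ (hex _) (e.orthonormal.2 hij.symm)
    · exact capMoment_offdiag c x _ _ (hex _) (e.orthonormal.2 hij)
  have hmom : ∀ i j, Integrable (fun y : Metric.sphere (0 : Vec (n + 1)) 1 =>
      inner ℝ (e i) (y : Vec (n + 1)) * inner ℝ (e j) (y : Vec (n + 1)) * cap c x y)
      (sphereMeasure (n + 1)) := fun i j =>
    integrable_mul_cap c x (fun y => inner ℝ (e i) y * inner ℝ (e j) y) (by fun_prop)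
  have hexp : ∀ y : Vec (n + 1), inner ℝ y (T y) =
      ∑ i, ∑ j, inner ℝ (e i) (T (e j)) * (inner ℝ (e i) y * inner ℝ (e j) y) := by
    intro y
    rw [← e.sum_inner_mul_inner y (T y)]
    refine Finset.sum_congr rfl fun i _ => ?_
    conv_lhs => rw [← e.sum_repr' y, map_sum, inner_sum, Finset.mul_sum]
    refine Finset.sum_congr rfl fun j _ => ?_
    rw [e.sum_repr' y, map_smul, inner_smul_right, real_inner_comm y (e i)]
    ring
  have hI : ∫ y : Metric.sphere (0 : Vec (n + 1)) 1, inner ℝ (y : Vec (n + 1)) (T y) * cap c x y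
      ∂(sphereMeasure (n + 1)) = ∑ i, inner ℝ (e i) (T (e i)) * capMoment c x (e i) (e i) := by
    have h1 : ∀ y : Metric.sphere (0 : Vec (n + 1)) 1, inner ℝ (y : Vec (n + 1)) (T y) * cap c x y =
        ∑ i, ∑ j, inner ℝ (e i) (T (e j)) *
          (inner ℝ (e i) (y : Vec (n + 1)) * inner ℝ (e j) (y : Vec (n + 1)) * cap c x y) := by
      intro y
      rw [hexp, Finset.sum_mul]
      refine Finset.sum_congr rfl fun i _ => ?_
      rw [Finset.sum_mul]
      refine Finset.sum_congr rfl fun j _ => ?_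
      ring
    simp only [h1]
    rw [integral_finsetSum _ (fun i _ => integrable_finsetSum _ fun j _ => (hmom i j).const_mul _)]
    refine Finset.sum_congr rfl fun i _ => ?_
    rw [integral_finsetSum _ (fun j _ => (hmom i j).const_mul _)]
    rw [Finset.sum_eq_single i]
    · rw [integral_const_mul]; rfl
    · intro j _ hj
      rw [integral_const_mul]
      have := hoff i j hj.symm
      unfold capMoment at this
      rw [this, mul_zero]
    · simp
  have hquad : ∫ y : Metric.sphere (0 : Vec (n + 1)) 1,
      (((n : ℝ) + 1) * (inner ℝ x (y : Vec (n + 1))) ^ 2 - 1) * cap c x y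
      ∂(sphereMeasure (n + 1)) = n * (A0 - A1) := by
    have h1 : ∀ y : Metric.sphere (0 : Vec (n + 1)) 1,
        (((n : ℝ) + 1) * (inner ℝ x (y : Vec (n + 1))) ^ 2 - 1) * cap c x y =
        (n : ℝ) * (inner ℝ x (y : Vec (n + 1)) * inner ℝ x (y : Vec (n + 1)) * cap c x y) -
        ∑ i : Fin n, (inner ℝ (e i.succ) (y : Vec (n + 1)) * inner ℝ (e i.succ) (y : Vec (n + 1))
          * cap c x y) := by
      intro y
      have h2 : ∑ i, inner ℝ (e i) (y : Vec (n + 1)) ^ 2 = 1 := by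
        have := e.sum_sq_norm_inner_right (y : Vec (n + 1))
        simpa using this
      rw [Fin.sum_univ_succ, he0] at h2
      rw [← Finset.sum_mul]
      simp only [← pow_two]
      linear_combination cap c x y * h2
    simp only [h1]
    have hi0 := hmom 0 0
    rw [he0] at hi0
    rw [integral_sub (hi0.const_mul _) (integrable_finsetSum _ fun i _ => hmom _ _),
      integral_const_mul, integral_finsetSum _ (fun i _ => hmom _ _)]
    change (n : ℝ) * A0 - ∑ i : Fin n, capMoment c x (e i.succ) (e i.succ) = _
    simp only [hA1]
    simp
    ring
  have hz := zonal_quadratic n hn c hc hc'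
  have hz2 : ∫ y : Metric.sphere (0 : Vec (n + 1)) 1,
      (((n : ℝ) + 1) * (inner ℝ x (y : Vec (n + 1))) ^ 2 - 1) * cap c x y
      ∂(sphereMeasure (n + 1)) =
      ∫ x : Metric.sphere (0 : Vec (n + 1)) 1, (((n : ℝ) + 1) * ((x : Vec (n + 1)) 0) ^ 2 - 1) *
        (if (x : Vec (n + 1)) 0 ≤ c then 1 else 0) ∂(sphereMeasure (n + 1)) := by
    rw [← sphere_integral_comp_isometry n
      (fun y => (((n : ℝ) + 1) * (inner ℝ x y) ^ 2 - 1) * cap c x y) U, ← hU]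
    simp [cap, LinearIsometryEquiv.inner_map_map, EuclideanSpace.inner_single_left]
  rw [hz2, hz] at hquad
  have hn0 : (n : ℝ) ≠ 0 := by positivity
  have hA : A0 - A1 = - ((volume : Measure (Vec n)).real (Metric.ball 0 1) *
      (c * Real.sqrt (1 - c ^ 2) ^ n)) := by
    apply mul_left_cancel₀ hn0
    rw [← hquad]; ring
  rw [hI, Fin.sum_univ_succ, he0, ← hA]
  have htr := T.trace_eq_sum_inner e
  rw [hT, Fin.sum_univ_succ, he0] at htr
  simp only [hA1]
  rw [← Finset.sum_mul]
  linear_combination (-A1) * htr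

/-- Two applications of Euler's identity express a homogeneous quadratic polynomial through its
constant second derivatives; harmonicity says that their matrix has trace zero. -/
theorem harmonic_two_repr {n : ℕ} {G : Vec n → ℝ} (hG : IsSphericalHarmonic n 2 G) :
    ∃ T : Vec n →ₗ[ℝ] Vec n, LinearMap.trace ℝ _ T = 0 ∧
      ∀ x : Vec n, ‖x‖ = 1 → G x = inner ℝ x (T x) := by
  obtain ⟨P, hP, hL, hGP⟩ := hG
  have h1 : ∀ i, (MvPolynomial.pderiv i P).IsHomogeneous 1 := fun i => hP.pderiv
  have h0 : ∀ i j, (MvPolynomial.pderiv j (MvPolynomial.pderiv i P)).IsHomogeneous 0 :=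
    fun i j => (h1 i).pderiv
  let M : Matrix (Fin n) (Fin n) ℝ := fun i j =>
    (MvPolynomial.pderiv j (MvPolynomial.pderiv i P)).coeff 0 / 2
  have hM : ∀ i j, MvPolynomial.pderiv j (MvPolynomial.pderiv i P) =
      MvPolynomial.C (2 * M i j) := by
    intro i j
    have h2 : 2 * M i j = (MvPolynomial.pderiv j (MvPolynomial.pderiv i P)).coeff 0 := by
      simp only [M]
      ring
    rw [h2]
    exact MvPolynomial.totalDegree_eq_zero_iff_eq_C.1
      ((MvPolynomial.totalDegree_zero_iff_isHomogeneous _).2 (h0 i j))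
  have hev : ∀ x : Fin n → ℝ, MvPolynomial.eval x P = ∑ i, x i * ∑ j, M i j * x j := by
    intro x
    have e2 := congrArg (MvPolynomial.eval x) hP.sum_X_mul_pderiv
    have e1 : ∀ i, _ := fun i => congrArg (MvPolynomial.eval x) (h1 i).sum_X_mul_pderiv
    simp only [hM, map_sum, map_mul, MvPolynomial.eval_X, MvPolynomial.eval_C, one_smul] at e1
    simp only [map_sum, map_mul, MvPolynomial.eval_X, ← e1] at e2
    simp only [nsmul_eq_mul, map_mul, Nat.cast_ofNat, map_ofNat] at e2
    have : ∑ i, x i * ∑ j, x j * (2 * M i j) = 2 * ∑ i, x i * ∑ j, M i j * x j := by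
      simp only [Finset.mul_sum]
      refine Finset.sum_congr rfl fun i _ => Finset.sum_congr rfl fun j _ => by ring
    linarith
  refine ⟨Matrix.toEuclideanLin M, ?_, ?_⟩
  · rw [LinearMap.trace_eq_sum_inner _ (EuclideanSpace.basisFun (Fin n) ℝ)]
    have := congrArg (MvPolynomial.eval (0 : Fin n → ℝ)) hL
    simp only [hM, map_sum, MvPolynomial.eval_C, map_zero, ← Finset.mul_sum] at this
    simp [EuclideanSpace.inner_single_left, Matrix.toLpLin_apply]
    linarith
  · intro x hx
    rw [hGP x hx, hev]
    simp [PiLp.inner_apply, Matrix.toLpLin_apply, Matrix.mulVec, dotProduct, mul_comm]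

/-! ### The gradient of the convolution kernel -/

theorem Kker_isometry {n : ℕ} (r : Fin 3 → ℝ) (k : Fin 3) (U : Vec n ≃ₗᵢ[ℝ] Vec n) (x : Vec n) :
    Kker r k (U x) = Kker r k x := by
  unfold Kker conv
  rw [← (LinearIsometryEquiv.measurePreserving U).integral_comp
    U.toMeasurableEquiv.measurableEmbedding]
  simp only [ind, ← map_sub, indicator, Metric.mem_closedBall, dist_zero_right,
    LinearIsometryEquiv.norm_map]
  rfl

theorem Kker_radial {n : ℕ} (r : Fin 3 → ℝ) (k : Fin 3) (x : Vec (n + 1)) :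
    Kker r k x = Kker r k (‖x‖ • EuclideanSpace.single (0 : Fin (n + 1)) (1 : ℝ)) := by
  have h : ‖x‖ = ‖‖x‖ • EuclideanSpace.single (0 : Fin (n + 1)) (1 : ℝ)‖ := by
    simp [norm_smul]
  rw [← Submodule.reflection_sub h, Kker_isometry]

/-- The `n`-th power of the radius of the slice at height `t` of the ball of radius `|a|` in
`ℝ × ℝ^n`; for `n ≥ 1` it vanishes when the slice is empty. -/
def prof (n : ℕ) (a t : ℝ) : ℝ := Real.sqrt (a ^ 2 - t ^ 2) ^ n

theorem prof_continuous (n : ℕ) (a : ℝ) : Continuous (prof n a) := by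
  unfold prof; fun_prop

theorem prof_integrable {n : ℕ} (hn : 1 ≤ n) (a : ℝ) : Integrable (prof n a) := by
  refine (prof_continuous n a).integrable_of_hasCompactSupport
    (HasCompactSupport.of_support_subset_isCompact (isCompact_Icc (a := -|a|) (b := |a|)) ?_)
  intro t ht
  rw [mem_Icc, ← abs_le]
  by_contra h
  refine ht ?_
  have : a ^ 2 - t ^ 2 ≤ 0 := by
    rw [← sq_abs a, ← sq_abs t]; nlinarith [abs_nonneg a, not_le.1 h]
  simp [prof, Real.sqrt_eq_zero_of_nonpos this, show n ≠ 0 by omega]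

/-- Up to the volume of the unit ball of `ℝ^n`, the volume of the part of the ball of radius `|a|`
in `ℝ × ℝ^n` at heights above `s`. -/
def tail (n : ℕ) (a s : ℝ) : ℝ := ∫ t in Ioi s, prof n a t

theorem tail_hasDerivAt {n : ℕ} (hn : 1 ≤ n) (a s : ℝ) :
    HasDerivAt (tail n a) (- prof n a s) s := by
  have h : tail n a = fun s => tail n a 0 - ∫ t in (0 : ℝ)..s, prof n a t := by
    ext s
    have := intervalIntegral.integral_interval_add_Ioi (a := 0) (b := s) (f := prof n a)
      (prof_integrable hn a).integrableOn (prof_integrable hn a).integrableOn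
    unfold tail
    linarith
  rw [h]
  exact (intervalIntegral.integral_hasDerivAt_right
    ((prof_continuous n a).intervalIntegrable _ _)
    ((prof_continuous n a).stronglyMeasurableAtFilter _ _)
    (prof_continuous n a).continuousAt).const_sub _

/-- Valid for negative `m` too: both sides then vanish, as `√m = 0` and `n ≥ 1`. -/
theorem slice_volume {n : ℕ} (hn : 1 ≤ n) (m : ℝ) :
    ∫ z : Vec n, (if ‖z‖ ^ 2 ≤ m then (1 : ℝ) else 0) =
      (volume : Measure (Vec n)).real (Metric.ball 0 1) * Real.sqrt m ^ n := by
  have h0 : ∀ z : Vec n, (if ‖z‖ ^ 2 ≤ m then (1 : ℝ) else 0) =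
      {z : Vec n | ‖z‖ ^ 2 ≤ m}.indicator 1 z := fun z => by simp [indicator]
  simp only [h0]
  have hms : MeasurableSet {z : Vec n | ‖z‖ ^ 2 ≤ m} := measurableSet_le (by fun_prop) (by fun_prop)
  rw [integral_indicator_one hms]
  rcases lt_or_ge m 0 with hm | hm
  · have : {z : Vec n | ‖z‖ ^ 2 ≤ m} = ∅ := by
      ext z; simp; nlinarith [sq_nonneg ‖z‖]
    rw [this, Real.sqrt_eq_zero_of_nonpos hm.le]
    simp [show n ≠ 0 by omega]
  · have : {z : Vec n | ‖z‖ ^ 2 ≤ m} = Metric.closedBall 0 (Real.sqrt m) := by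
      ext z
      simp [Real.le_sqrt (norm_nonneg z) hm]
    rw [this, measureReal_def, Measure.addHaar_closedBall _ _ (Real.sqrt_nonneg _),
      ENNReal.toReal_mul, ENNReal.toReal_ofReal (by positivity), measureReal_def]
    simp [mul_comm]

/-- On the first axis, `K_k` is the volume of the intersection of two balls at distance `ρ`, and the
hyperplane through the intersection of the two boundary spheres cuts it into two caps. -/
theorem Kker_axis {n : ℕ} (hn : 1 ≤ n) (r : Fin 3 → ℝ) (k : Fin 3) (ha : 0 < r (k + 1))
    (hb : 0 < r (k + 2)) (ρ : ℝ) (hρ : 0 < ρ) :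
    Kker r k (ρ • EuclideanSpace.single (0 : Fin (n + 1)) (1 : ℝ)) =
      (volume : Measure (Vec n)).real (Metric.ball 0 1) *
        (tail n (r (k + 1)) ((ρ ^ 2 + r (k + 1) ^ 2 - r (k + 2) ^ 2) / (2 * ρ)) +
         tail n (r (k + 2)) (ρ - (ρ ^ 2 + r (k + 1) ^ 2 - r (k + 2) ^ 2) / (2 * ρ))) := by
  set a := r (k + 1)
  set b := r (k + 2)
  set τ := (ρ ^ 2 + a ^ 2 - b ^ 2) / (2 * ρ) with hτ
  have hτ' : 2 * ρ * τ = ρ ^ 2 + a ^ 2 - b ^ 2 := by rw [hτ]; field_simp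
  set x : Vec (n + 1) := ρ • EuclideanSpace.single (0 : Fin (n + 1)) (1 : ℝ) with hx
  have hxe : x = consEquiv n (ρ, 0) := by
    ext i
    rcases Fin.eq_zero_or_eq_succ i with rfl | ⟨i, rfl⟩
    · simp [x, consEquiv_zero]
    · simp [x, consEquiv_succ]
  have hsub : ∀ p : ℝ × Vec n, x - consEquiv n p = consEquiv n (ρ - p.1, - p.2) := by
    intro p
    rw [hxe]
    ext i
    rcases Fin.eq_zero_or_eq_succ i with rfl | ⟨i, rfl⟩
    · simp [consEquiv_zero]
    · simp [consEquiv_succ]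
  let f : Vec (n + 1) → ℝ := fun y =>
    ind (Metric.closedBall 0 a) y * ind (Metric.closedBall 0 b) (x - y)
  have hmi : ∀ s : ℝ, Measurable (ind (Metric.closedBall (0 : Vec (n + 1)) s)) := fun s =>
    measurable_one.indicator measurableSet_closedBall
  have hfi : Integrable f := by
    have h1 : Integrable (ind (Metric.closedBall (0 : Vec (n + 1)) a)) :=
      (integrable_indicator_iff measurableSet_closedBall).2
        (integrableOn_const measure_closedBall_lt_top.ne)
    refine h1.mul_bdd (c := 1) ((hmi b).comp (by fun_prop)).aestronglyMeasurable ?_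
    refine Filter.Eventually.of_forall fun y => ?_
    simp only [ind, indicator]
    split_ifs <;> simp
  have hball : ∀ (s : ℝ) (_ : 0 < s) (p : ℝ × Vec n),
      consEquiv n p ∈ Metric.closedBall (0 : Vec (n + 1)) s ↔ ‖p.2‖ ^ 2 ≤ s ^ 2 - p.1 ^ 2 := by
    intro s hs p
    rw [mem_closedBall_zero_iff, ← sq_le_sq₀ (norm_nonneg _) hs.le, consEquiv_norm_sq]
    constructor <;> intro h <;> linarith
  have hfp : ∀ p : ℝ × Vec n, f (consEquiv n p) =
      if ‖p.2‖ ^ 2 ≤ min (a ^ 2 - p.1 ^ 2) (b ^ 2 - (ρ - p.1) ^ 2) then 1 else 0 := by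
    intro p
    simp only [f, hsub, ind, indicator, hball a ha, hball b hb, norm_neg, le_min_iff]
    by_cases h1 : ‖p.2‖ ^ 2 ≤ a ^ 2 - p.1 ^ 2 <;>
      by_cases h2 : ‖p.2‖ ^ 2 ≤ b ^ 2 - (ρ - p.1) ^ 2 <;> simp [h1, h2]
  have hfi' := ((measurePreserving_consEquiv n).integrable_comp_emb (consEquiv n).measurableEmbedding).2 hfi
  change ∫ y, f y = _
  rw [← (measurePreserving_consEquiv n).integral_comp (consEquiv n).measurableEmbedding]
  change ∫ p : ℝ × Vec n, (f ∘ consEquiv n) p ∂(volume.prod volume) = _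
  rw [integral_prod _ hfi']
  simp only [Function.comp, hfp, slice_volume hn]
  rw [integral_const_mul]
  congr 1
  have hsplit : ∀ t : ℝ, Real.sqrt (min (a ^ 2 - t ^ 2) (b ^ 2 - (ρ - t) ^ 2)) ^ n =
      (Ioi τ).indicator (prof n a) t + (Ici (ρ - τ)).indicator (prof n b) (ρ - t) := by
    intro t
    rcases lt_or_ge τ t with h | h
    · rw [indicator_of_mem (mem_Ioi.2 h), indicator_of_notMem (by
          rw [mem_Ici]; linarith), add_zero,
        min_eq_left (by nlinarith)]
      rfl
    · rw [indicator_of_notMem (by simpa using h), indicator_of_mem (by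
          rw [mem_Ici]; linarith), zero_add,
        min_eq_right (by nlinarith)]
      rfl
  have hi2 : Integrable ((Ici (ρ - τ)).indicator (prof n b)) :=
    (prof_integrable hn b).indicator measurableSet_Ici
  simp only [hsplit]
  rw [integral_add ((prof_integrable hn a).indicator measurableSet_Ioi) (hi2.comp_sub_left ρ),
    integral_sub_left_eq_self ((Ici (ρ - τ)).indicator (prof n b)) volume ρ,
    integral_indicator measurableSet_Ioi, integral_indicator measurableSet_Ici,
    integral_Ici_eq_integral_Ioi]
  rfl

/-- Lower bound for `γ_k` by the volume of the `n`-dimensional ball bounded by the intersection of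
the two spheres. When the separating hyperplane moves with `ρ`, the two contributions of this motion
cancel since both balls have the same slice there (`hsym`). Differentiability is part of the proof,
because `fderiv` would be `0` without it. -/
theorem gammaCoef_ge {n : ℕ} (hn : 1 ≤ n) (r : Fin 3 → ℝ) (hr : ∀ j, 0 < r j) (k : Fin 3) :
    (volume : Measure (Vec n)).real (Metric.ball 0 1) *
      prof n (r (k + 1)) ((r k ^ 2 + r (k + 1) ^ 2 - r (k + 2) ^ 2) / (2 * r k)) ≤
    gammaCoef (n + 1) r k := by
  set a := r (k + 1) with ha
  set b := r (k + 2) with hb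
  set v := (volume : Measure (Vec n)).real (Metric.ball 0 1) with hv
  set e : Vec (n + 1) := EuclideanSpace.single (0 : Fin (n + 1)) (1 : ℝ) with he
  have hρ := hr k
  set ρ := r k with hρd
  let τ : ℝ → ℝ := fun s => (s ^ 2 + a ^ 2 - b ^ 2) / (2 * s)
  have hτd : DifferentiableAt ℝ τ ρ := by
    have : 2 * ρ ≠ 0 := by positivity
    exact DifferentiableAt.div (by fun_prop) (by fun_prop) this
  have hsym : prof n b (ρ - τ ρ) = prof n a (τ ρ) := by
    unfold prof
    congr 2
    simp only [τ]
    field_simp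
    ring
  have hκ : HasDerivAt (fun s : ℝ => Kker r k (s • e)) (-(v * prof n a (τ ρ))) ρ := by
    have h1 := (tail_hasDerivAt hn a (τ ρ)).comp ρ hτd.hasDerivAt
    have h2 := (tail_hasDerivAt hn b (ρ - τ ρ)).comp ρ ((hasDerivAt_id ρ).sub hτd.hasDerivAt)
    have h3 := ((h1.add h2).const_mul v).congr_deriv
      (show _ = -(v * prof n a (τ ρ)) by rw [hsym]; ring)
    refine h3.congr_of_eventuallyEq ?_
    filter_upwards [lt_mem_nhds hρ] with s hs
    exact Kker_axis hn r k (hr _) (hr _) s hs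
  have hne : ρ • e ≠ 0 := by
    rw [← norm_ne_zero_iff]; simp [e, norm_smul, hρ.ne']
  have hnorm : ‖ρ • e‖ = ρ := by simp [e, norm_smul, abs_of_pos hρ]
  have hd : DifferentiableAt ℝ (Kker r k) (ρ • e) := by
    have : (Kker r k : Vec (n + 1) → ℝ) = (fun s : ℝ => Kker r k (s • e)) ∘ (fun x => ‖x‖) := by
      ext x
      exact Kker_radial r k x
    rw [this]
    refine DifferentiableAt.comp _ ?_ (differentiableAt_id.norm ℝ hne)
    simp only [hnorm]
    exact hκ.differentiableAt
  have hline : HasDerivAt (fun s : ℝ => s • e) e ρ := by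
    simpa using (hasDerivAt_id ρ).smul_const e
  have hL := hd.hasFDerivAt.comp_hasDerivAt ρ hline
  have hval := hL.unique hκ
  have hg : gammaCoef (n + 1) r k = ‖fderiv ℝ (Kker r k) (ρ • e)‖ := by
    unfold gammaCoef
    rw [dif_neg (Nat.succ_ne_zero n)]
    rfl
  rw [hg]
  calc v * prof n a (τ ρ) ≤ ‖fderiv ℝ (Kker r k) (ρ • e) e‖ := by
        rw [hval, norm_neg]; exact le_abs_self _
    _ ≤ ‖fderiv ℝ (Kker r k) (ρ • e)‖ * ‖e‖ := ContinuousLinearMap.le_opNorm _ _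
    _ = _ := by simp [e]

/-! ### The spectral gap -/

/-- Strict spectral gap for the form `Q₁` on spherical harmonics of degree `2`. -/
theorem Q1_spectral_gap_degree_two (d : ℕ) (hd : 2 ≤ d) (r : Fin 3 → ℝ)
    (hr : StrictlyAdmissible r) :
    ∃ A < (1 : ℝ) / 2, ∀ G₂ G₃ : Vec d → ℝ,
      IsSphericalHarmonic d 2 G₂ → IsSphericalHarmonic d 2 G₃ →
      Qform r 1 2 0 G₂ G₃ ≤
        A * (gammaCoef d r 1 * r 1 ^ ((1 : ℝ) - d) * L2sq G₂ +
             gammaCoef d r 2 * r 2 ^ ((1 : ℝ) - d) * L2sq G₃) := by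
  obtain ⟨n, rfl⟩ : ∃ n, d = n + 1 := ⟨d - 1, by omega⟩
  have hn : 1 ≤ n := by omega
  obtain ⟨hpos, htri⟩ := hr
  have hp0 := hpos 0
  have hp1 := hpos 1
  have hp2 := hpos 2
  have t0 : r 0 < r 1 + r 2 := htri 1 2 0 (by ext i; fin_cases i <;> simp)
  have t1 : r 1 < r 2 + r 0 := htri 2 0 1 (by ext i; fin_cases i <;> simp)
  have t2 : r 2 < r 0 + r 1 := htri 0 1 2 (by ext i; fin_cases i <;> simp)
  -- `-c` is the cosine of the angle opposite to the side `r 0`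
  set c : ℝ := (r 0 ^ 2 - r 1 ^ 2 - r 2 ^ 2) / (2 * r 1 * r 2) with hcdef
  have hden : 0 < 2 * r 1 * r 2 := by positivity
  have hc : -1 < c := by rw [hcdef, lt_div_iff₀ hden]; nlinarith
  have hc' : c < 1 := by rw [hcdef, div_lt_iff₀ hden]; nlinarith
  have hcm : 2 * r 1 * r 2 * c = r 0 ^ 2 - r 1 ^ 2 - r 2 ^ 2 := by rw [hcdef]; field_simp
  set s : ℝ := Real.sqrt (1 - c ^ 2) with hs
  set v := (volume : Measure (Vec n)).real (Metric.ball 0 1) with hv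
  have hv0 : 0 < v := unit_ball_vol_pos n
  have hs0 : 0 ≤ s := Real.sqrt_nonneg _
  have g1 : v * (r 2 * s) ^ n ≤ gammaCoef (n + 1) r 1 := by
    have h := gammaCoef_ge hn r hpos 1
    rw [show (1 : Fin 3) + 1 = 2 from rfl, show (1 : Fin 3) + 2 = 0 from rfl] at h
    convert h using 2
    unfold prof
    congr 1
    rw [show (r 1 ^ 2 + r 2 ^ 2 - r 0 ^ 2) / (2 * r 1) = - c * r 2 by
        rw [hcdef]; field_simp; ring,
      show r 2 ^ 2 - (- c * r 2) ^ 2 = r 2 ^ 2 * (1 - c ^ 2) by ring,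
      Real.sqrt_mul (by positivity), Real.sqrt_sq hp2.le]
  have g2 : v * (r 1 * s) ^ n ≤ gammaCoef (n + 1) r 2 := by
    have h := gammaCoef_ge hn r hpos 2
    rw [show (2 : Fin 3) + 1 = 0 from rfl, show (2 : Fin 3) + 2 = 1 from rfl] at h
    convert h using 2
    unfold prof
    congr 1
    rw [show r 0 ^ 2 - ((r 2 ^ 2 + r 0 ^ 2 - r 1 ^ 2) / (2 * r 2)) ^ 2
        = r 1 ^ 2 * (1 - c ^ 2) by rw [hcdef]; field_simp; ring,
      Real.sqrt_mul (by positivity), Real.sqrt_sq hp1.le]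
  refine ⟨|c| / 2, by have := abs_lt.2 ⟨hc, hc'⟩; linarith, ?_⟩
  intro G₂ G₃ hG₂ hG₃
  obtain ⟨T₂, -, h₂⟩ := harmonic_two_repr hG₂
  obtain ⟨T₃, hT₃, h₃⟩ := harmonic_two_repr hG₃
  have hS : ∀ x : Metric.sphere (0 : Vec (n + 1)) 1, ‖(x : Vec (n + 1))‖ = 1 := fun x => by simp
  -- the ball condition is a condition on the inner product
  have hcap : ∀ x y : Metric.sphere (0 : Vec (n + 1)) 1,
      (if ‖r 1 • (x : Vec (n + 1)) + r 2 • (y : Vec (n + 1))‖ ≤ r 0 then (1 : ℝ) else 0) =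
      cap c (x : Vec (n + 1)) y := by
    intro x y
    unfold cap
    congr 1
    rw [eq_iff_iff, ← sq_le_sq₀ (norm_nonneg _) hp0.le, norm_add_sq_real, norm_smul, norm_smul, hS,
      hS, inner_smul_left, inner_smul_right, hcdef, le_div_iff₀ hden]
    simp only [Real.norm_eq_abs, mul_one, sq_abs, conj_trivial]
    constructor <;> intro h <;> linarith
  set b : ℝ := - (v * (c * s ^ n)) with hb
  have hQ : Qform r 1 2 0 G₂ G₃ = ∫ x : Metric.sphere (0 : Vec (n + 1)) 1, b * (G₂ x * G₃ x)
      ∂(sphereMeasure (n + 1)) := by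
    unfold Qform
    congr 1
    ext x
    have := funk_hecke hn c hc hc' x (hS x) T₃ hT₃
    rw [← h₃ x (hS x)] at this
    rw [show b * (G₂ x * G₃ x) = G₂ x * (b * G₃ x) by ring, hb, hv, hs, ← this,
      ← integral_const_mul]
    congr 1
    ext y
    rw [hcap, h₃ y (hS y)]
    ring
  have hfin : IsFiniteMeasure (sphereMeasure (n + 1)) := by unfold sphereMeasure; infer_instance
  have hcont : ∀ (T T' : Vec (n + 1) →ₗ[ℝ] Vec (n + 1)),
      Integrable (fun x : Metric.sphere (0 : Vec (n + 1)) 1 =>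
        inner ℝ (x : Vec (n + 1)) (T x) * inner ℝ (x : Vec (n + 1)) (T' x))
        (sphereMeasure (n + 1)) := by
    intro T T'
    have hT := T.continuous_of_finiteDimensional
    have hT' := T'.continuous_of_finiteDimensional
    have hcc : Continuous fun x : Metric.sphere (0 : Vec (n + 1)) 1 =>
        inner ℝ (x : Vec (n + 1)) (T x) * inner ℝ (x : Vec (n + 1)) (T' x) := by fun_prop
    exact hcc.integrable_of_hasCompactSupport (HasCompactSupport.of_compactSpace _)
  have i22 : Integrable (fun x : Metric.sphere (0 : Vec (n + 1)) 1 => G₂ x ^ 2)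
      (sphereMeasure (n + 1)) := by
    refine (hcont T₂ T₂).congr (Filter.Eventually.of_forall fun x => ?_)
    simp only [h₂ x (hS x), pow_two]
  have i33 : Integrable (fun x : Metric.sphere (0 : Vec (n + 1)) 1 => G₃ x ^ 2)
      (sphereMeasure (n + 1)) := by
    refine (hcont T₃ T₃).congr (Filter.Eventually.of_forall fun x => ?_)
    simp only [h₃ x (hS x), pow_two]
  have i23 : Integrable (fun x : Metric.sphere (0 : Vec (n + 1)) 1 => G₂ x * G₃ x)
      (sphereMeasure (n + 1)) := by
    refine (hcont T₂ T₃).congr (Filter.Eventually.of_forall fun x => ?_)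
    simp only [h₂ x (hS x), h₃ x (hS x)]
  have hL2 : 0 ≤ L2sq G₂ := integral_nonneg fun x => sq_nonneg _
  have hL3 : 0 ≤ L2sq G₃ := integral_nonneg fun x => sq_nonneg _
  -- the weight balancing the two squares in the inequality of means
  set μ : ℝ := (r 2) ^ n / (r 1) ^ n with hμ
  have hμ0 : 0 < μ := by positivity
  have hpt : ∀ p q : ℝ, b * (p * q) ≤ |b| / 2 * μ * p ^ 2 + |b| / 2 * μ⁻¹ * q ^ 2 := by
    intro p q
    have h1 : b * (p * q) ≤ |b| * |p * q| := by rw [← abs_mul]; exact le_abs_self _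
    have h2 : |p * q| ≤ (μ * p ^ 2 + μ⁻¹ * q ^ 2) / 2 := by
      have e1 : 0 ≤ μ⁻¹ * (μ * p - q) ^ 2 := by positivity
      have e2 : 0 ≤ μ⁻¹ * (μ * p + q) ^ 2 := by positivity
      have e3 : μ⁻¹ * (μ * p - q) ^ 2 = μ * p ^ 2 - 2 * (p * q) + μ⁻¹ * q ^ 2 := by
        field_simp; ring
      have e4 : μ⁻¹ * (μ * p + q) ^ 2 = μ * p ^ 2 + 2 * (p * q) + μ⁻¹ * q ^ 2 := by
        field_simp; ring
      rw [abs_le]; constructor <;> linarith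
    calc b * (p * q) ≤ |b| * |p * q| := h1
      _ ≤ |b| * ((μ * p ^ 2 + μ⁻¹ * q ^ 2) / 2) := by gcongr
      _ = _ := by ring
  have hQle : Qform r 1 2 0 G₂ G₃ ≤ |b| / 2 * μ * L2sq G₂ + |b| / 2 * μ⁻¹ * L2sq G₃ := by
    rw [hQ, L2sq, L2sq, ← integral_const_mul, ← integral_const_mul,
      ← integral_add (i22.const_mul _) (i33.const_mul _)]
    exact integral_mono (i23.const_mul _) ((i22.const_mul _).add (i33.const_mul _))
      fun x => hpt _ _
  have hb' : |b| = |c| * (v * s ^ n) := by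
    rw [hb, abs_neg, abs_mul, abs_mul, abs_of_pos hv0, abs_of_nonneg (pow_nonneg hs0 n)]; ring
  have hexp : ∀ x : ℝ, 0 < x → x ^ ((1 : ℝ) - ((n + 1 : ℕ) : ℝ)) = (x ^ n)⁻¹ := by
    intro x hx
    rw [show (1 : ℝ) - ((n + 1 : ℕ) : ℝ) = -(n : ℝ) by push_cast; ring, Real.rpow_neg hx.le,
      Real.rpow_natCast]
  rw [hexp _ hp1, hexp _ hp2]
  refine hQle.trans ?_
  have k1 : v * s ^ n * μ ≤ gammaCoef (n + 1) r 1 * (r 1 ^ n)⁻¹ := by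
    calc v * s ^ n * μ = v * (r 2 * s) ^ n * (r 1 ^ n)⁻¹ := by rw [hμ, mul_pow]; ring
      _ ≤ _ := by gcongr
  have k2 : v * s ^ n * μ⁻¹ ≤ gammaCoef (n + 1) r 2 * (r 2 ^ n)⁻¹ := by
    calc v * s ^ n * μ⁻¹ = v * (r 1 * s) ^ n * (r 2 ^ n)⁻¹ := by rw [hμ, mul_pow, inv_div]; ring
      _ ≤ _ := by gcongr
  calc |b| / 2 * μ * L2sq G₂ + |b| / 2 * μ⁻¹ * L2sq G₃
      = |c| / 2 * (v * s ^ n * μ * L2sq G₂ + v * s ^ n * μ⁻¹ * L2sq G₃) := by rw [hb']; ring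
    _ ≤ _ := by gcongr
end
end

section
/- Let F₀, F₁ ∈ L¹((0,∞)) be nonincreasing nonnegative functions satisfying ∫_y^∞ F₀(x) dx ≥ ∫_y^∞ F₁(x) dx for all y ∈ (0,∞). Then for each τ ∈ (0,∞), ∫_0^∞ min(F₀(x), τ) dx ≥ ∫_0^∞ min(F₁(x), τ) dx. -/
open MeasureTheory Set

/-!
Let `y = inf {x > 0 : F₀ x ≤ τ}`; the set is nonempty because `F₀` is integrable. By monotonicity
`F₀ > τ` on `(0, y)` and `F₀ ≤ τ` beyond any point `z` of the set. For such a `z < y + ε`,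
`∫ min(F₁, τ) ≤ τ z + ∫_z^∞ F₁ ≤ τ z + ∫_z^∞ F₀ = τ z + ∫_z^∞ min(F₀, τ)
  ≤ τ (z - y) + ∫ min(F₀, τ)`, and `ε` is arbitrary. Working at `z > 0` rather than at `y` covers
the case `y = 0`, where the tail hypothesis is not available.
-/

/-- Split the integral of `G` over `(0, ∞)` at `a`. -/
lemma setIntegral_Ioi_zero_split {G : ℝ → ℝ} (hG : IntegrableOn G (Ioi 0)) {a : ℝ} (ha : 0 ≤ a) :
    ∫ x in Ioi (0 : ℝ), G x = (∫ x in Ioo 0 a, G x) + ∫ x in Ioi a, G x := by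
  rw [← Ioc_union_Ioi_eq_Ioi ha, setIntegral_union (Ioc_disjoint_Ioi le_rfl) measurableSet_Ioi
    (hG.mono_set Ioc_subset_Ioi_self) (hG.mono_set (Ioi_subset_Ioi ha)), integral_Ioc_eq_integral_Ioo]

lemma integrableOn_min_const {F : ℝ → ℝ} (hF : IntegrableOn F (Ioi 0))
    (hn : ∀ x ∈ Ioi (0 : ℝ), 0 ≤ F x) {τ : ℝ} (hτ : 0 < τ) :
    IntegrableOn (fun x => min (F x) τ) (Ioi 0) := by
  refine Integrable.mono hF (hF.aestronglyMeasurable.inf aestronglyMeasurable_const) ?_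
  filter_upwards [ae_restrict_mem measurableSet_Ioi] with x hx
  rw [Real.norm_of_nonneg (le_min (hn x hx) hτ.le), Real.norm_of_nonneg (hn x hx)]
  exact min_le_left _ _

/-- Truncation at level `τ` preserves the ordering of tails for nonincreasing
nonnegative integrable functions on `(0,∞)`. -/
theorem truncated_integral_of_tail_domination (F₀ F₁ : ℝ → ℝ)
    (hi₀ : IntegrableOn F₀ (Set.Ioi 0)) (hi₁ : IntegrableOn F₁ (Set.Ioi 0))
    (hm₀ : AntitoneOn F₀ (Set.Ioi 0)) (hm₁ : AntitoneOn F₁ (Set.Ioi 0))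
    (hn₀ : ∀ x ∈ Set.Ioi (0:ℝ), 0 ≤ F₀ x) (hn₁ : ∀ x ∈ Set.Ioi (0:ℝ), 0 ≤ F₁ x)
    (htail : ∀ y ∈ Set.Ioi (0:ℝ), (∫ x in Set.Ioi y, F₁ x) ≤ ∫ x in Set.Ioi y, F₀ x)
    (τ : ℝ) (hτ : 0 < τ) :
    (∫ x in Set.Ioi (0:ℝ), min (F₁ x) τ) ≤ ∫ x in Set.Ioi (0:ℝ), min (F₀ x) τ := by
  have hM₀ := integrableOn_min_const hi₀ hn₀ hτ
  have hM₁ := integrableOn_min_const hi₁ hn₁ hτ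
  set A : Set ℝ := {x | 0 < x ∧ F₀ x ≤ τ} with hA
  -- If `F₀ > τ` everywhere, the constant `τ` would be integrable on `(0, ∞)`.
  have hne : A.Nonempty := by
    by_contra h
    have hbig : ∀ x ∈ Ioi (0 : ℝ), τ < F₀ x := fun x hx => by
      by_contra hx'
      exact h ⟨x, hx, not_lt.1 hx'⟩
    have hc : IntegrableOn (fun _ : ℝ => τ) (Ioi 0) := by
      refine Integrable.mono hi₀ aestronglyMeasurable_const ?_
      filter_upwards [ae_restrict_mem measurableSet_Ioi] with x hx
      rw [Real.norm_of_nonneg hτ.le, Real.norm_of_nonneg (hn₀ x hx)]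
      exact (hbig x hx).le
    rw [integrableOn_const_iff] at hc
    simp [hτ.ne'] at hc
  have hbdd : BddBelow A := ⟨0, fun x hx => hx.1.le⟩
  set y := sInf A
  have hy : 0 ≤ y := le_csInf hne fun x hx => hx.1.le
  have hlow : ∀ x ∈ Ioo 0 y, min (F₀ x) τ = τ := fun x hx => by
    refine min_eq_right (le_of_lt ?_)
    by_contra h
    exact absurd (csInf_le hbdd (show x ∈ A from ⟨hx.1, not_lt.1 h⟩)) (not_le.2 hx.2)
  refine le_of_forall_pos_le_add fun ε hε => ?_
  obtain ⟨z, hzA, hz⟩ := exists_lt_of_csInf_lt hne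
    (show sInf A < y + ε / τ from lt_add_of_pos_right _ (by positivity))
  have hz0 : 0 < z := hzA.1
  have hyz : y ≤ z := csInf_le hbdd hzA
  have e1 : ∫ x in Ioo 0 z, min (F₁ x) τ ≤ τ * z := by
    calc _ ≤ ∫ x in Ioo 0 z, τ := setIntegral_mono_on (hM₁.mono_set Ioo_subset_Ioi_self)
            (by simp) measurableSet_Ioo fun x _ => min_le_right _ _
      _ = τ * z := by simp [hz0.le, mul_comm]
  have e2 : ∫ x in Ioi z, min (F₁ x) τ ≤ ∫ x in Ioi z, F₁ x :=
    setIntegral_mono_on (hM₁.mono_set (Ioi_subset_Ioi hz0.le))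
      (hi₁.mono_set (Ioi_subset_Ioi hz0.le)) measurableSet_Ioi fun x _ => min_le_left _ _
  have e3 : ∫ x in Ioi z, F₀ x = ∫ x in Ioi z, min (F₀ x) τ :=
    setIntegral_congr_fun measurableSet_Ioi fun x hx =>
      (min_eq_left ((hm₀ hz0 (hz0.trans hx) (le_of_lt hx)).trans hzA.2)).symm
  have e4 : ∫ x in Ioi z, min (F₀ x) τ ≤ ∫ x in Ioi y, min (F₀ x) τ := by
    refine setIntegral_mono_set (hM₀.mono_set (Ioi_subset_Ioi hy)) ?_
      (Ioi_subset_Ioi hyz).eventuallyLE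
    filter_upwards [ae_restrict_mem measurableSet_Ioi] with x hx
    exact le_min (hn₀ x (hy.trans_lt hx)) hτ.le
  have e5 : ∫ x in Ioo 0 y, min (F₀ x) τ = τ * y := by
    rw [setIntegral_congr_fun measurableSet_Ioo hlow]
    simp [hy, mul_comm]
  have e6 : τ * z ≤ τ * y + ε := by
    have := mul_le_mul_of_nonneg_left hz.le hτ.le
    rwa [mul_add, mul_div_cancel₀ _ hτ.ne'] at this
  rw [setIntegral_Ioi_zero_split hM₁ hz0.le, setIntegral_Ioi_zero_split hM₀ hy]
  linarith [htail z hz0]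
end
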